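/- Let R = R^sc_⊞ ∪ R^sc_∧ be the set of single-conclusion rules over the signature with binary connectives ∧ and ⊞, where R^sc_⊞ = {({p,q}, p⊞q)} ∪ {({φ}, p) : φ ∈ L_⊞({p})} and R^sc_∧ = {({p∧q}, p), ({p∧q}, q), ({p,q}, p∧q)}. Then p∧q is not Hilbert-derivable from {(p∧q) ⊞ (q∧p)} using the rules R, i.e. {(p∧q)⊞(q∧p)} ⊬_R p∧q, even though {(p∧q)⊞(q∧p)} ⊩_{∧⊞} {p∧q} holds semantically. -/

import Mathlib

/-- Formulas built from countably many propositional variables with two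
binary connectives: `∧` (conjunction) and `⊞` (platypus). -/
inductive Fm2 : Type where
  | var : ℕ → Fm2
  | conj : Fm2 → Fm2 → Fm2
  | pl : Fm2 → Fm2 → Fm2
deriving DecidableEq

namespace Fm2

/-- A `𝔅_{∧⊞}`-valuation: `v (φ ∧ ψ) = min (v φ) (v ψ)` and
`v (φ ⊞ ψ) ∈ {min (v φ) (v ψ), max (v φ) (v ψ)}`. -/
def IsVal (v : Fm2 → Bool) : Prop :=
  (∀ a b : Fm2, v (a.conj b) = (v a && v b)) ∧
  (∀ a b : Fm2, v (a.pl b) = (v a && v b) ∨ v (a.pl b) = (v a || v b))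

/-- The multiple-conclusion consequence `Γ ⊩_{∧⊞} Δ`. -/
def Mc (Γ Δ : Set Fm2) : Prop :=
  ∀ v : Fm2 → Bool, IsVal v → (∀ φ ∈ Γ, v φ = true) → ∃ ψ ∈ Δ, v ψ = true

end Fm2

namespace Fm2

/-- Homomorphic extension of a substitution `σ : P → L_{∧⊞}` to formulas. -/
def subst (σ : ℕ → Fm2) : Fm2 → Fm2
  | var n => σ n
  | conj a b => (subst σ a).conj (subst σ b)
  | pl a b => (subst σ a).pl (subst σ b)

/-- Hilbert derivability from a set `R` of single-conclusion rules: `φ`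
belongs to the smallest set containing `Γ` and closed under substitution
instances of the rules in `R`. -/
inductive Der (R : Set (Set Fm2 × Fm2)) (Γ : Set Fm2) : Fm2 → Prop
  | prem {φ : Fm2} : φ ∈ Γ → Der R Γ φ
  | app {Prem : Set Fm2} {ψ : Fm2} (σ : ℕ → Fm2) : (Prem, ψ) ∈ R →
      (∀ π ∈ Prem, Der R Γ (subst σ π)) → Der R Γ (subst σ ψ)

/-- Membership in `L_⊞({p})`: formulas built from the single variable `p`
using only `⊞`. -/
inductive PlOnly (p : ℕ) : Fm2 → Prop
  | var : PlOnly p (var p)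
  | pl {a b : Fm2} : PlOnly p a → PlOnly p b → PlOnly p (a.pl b)

/-- `R^sc_⊞ = {({p,q}, p ⊞ q)} ∪ {({φ}, p) : φ ∈ L_⊞({p})}`
(with `p`, `q` the variables `0`, `1`). -/
def RscPl : Set (Set Fm2 × Fm2) :=
  {({var 0, var 1}, (var 0).pl (var 1))} ∪
  {r | ∃ φ : Fm2, PlOnly 0 φ ∧ r = ({φ}, var 0)}

/-- `R^sc_∧ = {({p ∧ q}, p), ({p ∧ q}, q), ({p,q}, p ∧ q)}`. -/
def RscConj : Set (Set Fm2 × Fm2) :=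
  {({(var 0).conj (var 1)}, var 0), ({(var 0).conj (var 1)}, var 1),
   ({var 0, var 1}, (var 0).conj (var 1))}

end Fm2

/-!
For `φ ≠ ψ`, whatever is derivable from `(φ ∧ ψ) ⊞ (ψ ∧ φ)` is derivable by introduction rules
alone. The premise is not a conjunction, so eliminating `∧` only undoes an introduction; and its two
halves are distinct conjunctions, so among the formulas of `L_⊞({p})` it is an instance of `p` only.
Introductions never shrink a formula, so `φ ∧ ψ`, being shorter than the premise, is out of reach.
Semantically, `φ ∧ ψ` and `ψ ∧ φ` have the same value, and on equal values `min` and `max` agree.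
-/

namespace Fm2

variable {p : ℕ} {σ : ℕ → Fm2} {Γ : Set Fm2} {φ χ a b c d : Fm2}

theorem PlOnly.eq_var_of_subst_eq_conj (hφ : PlOnly p φ) (h : subst σ φ = a.conj b) :
    φ = .var p := by
  cases hφ with
  | var => rfl
  | pl => cases h

theorem PlOnly.eq_var_of_subst_eq_pl_conj (hφ : PlOnly p φ) (hne : a.conj b ≠ c.conj d)
    (h : subst σ φ = (a.conj b).pl (c.conj d)) : φ = .var p := by
  cases hφ with
  | var => rfl
  | pl hleft hright =>
    obtain ⟨left_eq, right_eq⟩ := Fm2.pl.inj h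
    rw [hleft.eq_var_of_subst_eq_conj left_eq] at left_eq
    rw [hright.eq_var_of_subst_eq_conj right_eq] at right_eq
    exact absurd (left_eq.symm.trans right_eq) hne

/-- The closure of `Γ` under the introduction rules of `∧` and `⊞`, i.e. the formulas derivable
from `Γ` without the rules that eliminate a connective. -/
inductive IntroClosure (Γ : Set Fm2) : Fm2 → Prop
  | base {φ : Fm2} : φ ∈ Γ → IntroClosure Γ φ
  | conj {a b : Fm2} : IntroClosure Γ a → IntroClosure Γ b → IntroClosure Γ (a.conj b)
  | pl {a b : Fm2} : IntroClosure Γ a → IntroClosure Γ b → IntroClosure Γ (a.pl b)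

namespace IntroClosure

theorem exists_mem_sizeOf_le (h : IntroClosure Γ χ) : ∃ γ ∈ Γ, sizeOf γ ≤ sizeOf χ := by
  induction h with
  | base hmem => exact ⟨_, hmem, le_rfl⟩
  | conj _ _ ih _ | pl _ _ ih _ =>
    obtain ⟨γ, hγ, hle⟩ := ih
    exact ⟨γ, hγ, hle.trans (by simp +arith)⟩

theorem of_conj (hconj : a.conj b ∉ Γ) (h : IntroClosure Γ (a.conj b)) :
    IntroClosure Γ a ∧ IntroClosure Γ b := by
  cases h with
  | base hmem => exact absurd hmem hconj
  | conj ha hb => exact ⟨ha, hb⟩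

theorem of_subst_plOnly (hpl : ∀ φ, PlOnly p φ → subst σ φ ∈ Γ → φ = var p)
    (hφ : PlOnly p φ) (h : IntroClosure Γ (subst σ φ)) : IntroClosure Γ (σ p) := by
  induction hφ with
  | var => exact h
  | pl ha hb iha _ =>
    cases h with
    | base hmem => cases hpl _ (ha.pl hb) hmem
    | pl hleft _ => exact iha hleft

theorem of_der (hconj : ∀ a b : Fm2, a.conj b ∉ Γ)
    (hpl : ∀ σ φ, PlOnly 0 φ → subst σ φ ∈ Γ → φ = var 0)
    (h : Der (RscPl ∪ RscConj) Γ χ) : IntroClosure Γ χ := by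
  induction h with
  | prem hmem => exact base hmem
  | app σ hrule _ ih =>
    rcases hrule with (hrule | ⟨φ, hφ, hrule⟩) | hrule | hrule | hrule <;>
      obtain ⟨rfl, rfl⟩ := Prod.mk.inj hrule
    · exact pl (ih (var 0) (.inl rfl)) (ih (var 1) (.inr rfl))
    · exact of_subst_plOnly (hpl σ) hφ (ih φ rfl)
    · exact (of_conj (hconj _ _) (ih _ rfl)).1
    · exact (of_conj (hconj _ _) (ih _ rfl)).2
    · exact conj (ih (var 0) (.inl rfl)) (ih (var 1) (.inr rfl))

end IntroClosure

theorem not_der_conj_of_pl_conj (hne : a.conj b ≠ c.conj d) :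
    ¬ Der (RscPl ∪ RscConj) {(a.conj b).pl (c.conj d)} (a.conj b) := by
  intro hder
  have hclosure : IntroClosure {(a.conj b).pl (c.conj d)} (a.conj b) :=
    IntroClosure.of_der (fun _ _ h ↦ nomatch h)
      (fun _ _ hφ h ↦ hφ.eq_var_of_subst_eq_pl_conj hne h) hder
  obtain ⟨_, rfl, hle⟩ := hclosure.exists_mem_sizeOf_le
  have hlt : sizeOf (a.conj b) < sizeOf ((a.conj b).pl (c.conj d)) := by
    rw [Fm2.pl.sizeOf_spec]
    lia
  exact hlt.not_ge hle

variable {v : Fm2 → Bool}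

theorem IsVal.conj_comm (hv : IsVal v) (a b : Fm2) : v (a.conj b) = v (b.conj a) := by
  rw [hv.1, hv.1, Bool.and_comm]

theorem IsVal.pl_eq_left (hv : IsVal v) (h : v a = v b) : v (a.pl b) = v a := by
  simpa [← h] using hv.2 a b

theorem mc_pl_conj_comm (a b : Fm2) : Mc {(a.conj b).pl (b.conj a)} {a.conj b} := by
  intro v hv hprem
  exact ⟨_, rfl, (hv.pl_eq_left (hv.conj_comm a b)).symm.trans (hprem _ rfl)⟩

end Fm2

open Fm2 in
theorem conj_platypus_not_derivable_general (φ ψ : Fm2) (hne : φ ≠ ψ) :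
    ¬ Der (RscPl ∪ RscConj) {(φ.conj ψ).pl (ψ.conj φ)} (φ.conj ψ) ∧
    Mc {(φ.conj ψ).pl (ψ.conj φ)} {φ.conj ψ} :=
  ⟨not_der_conj_of_pl_conj fun h ↦ hne (Fm2.conj.inj h).1, mc_pl_conj_comm φ ψ⟩

open Fm2 in
/-- with `R = R^sc_⊞ ∪ R^sc_∧`, the formula `p ∧ q` is not
Hilbert-derivable from `{(p ∧ q) ⊞ (q ∧ p)}` using `R`, even though
`{(p ∧ q) ⊞ (q ∧ p)} ⊩_{∧⊞} {p ∧ q}` holds semantically. -/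
theorem conj_platypus_not_derivable (p q : ℕ) (hpq : p ≠ q) :
    ¬ Der (RscPl ∪ RscConj)
        {((Fm2.var p).conj (Fm2.var q)).pl ((Fm2.var q).conj (Fm2.var p))}
        ((Fm2.var p).conj (Fm2.var q)) ∧
    Mc {((Fm2.var p).conj (Fm2.var q)).pl ((Fm2.var q).conj (Fm2.var p))}
      {(Fm2.var p).conj (Fm2.var q)} :=
  conj_platypus_not_derivable_general (var p) (var q) fun h ↦ hpq (Fm2.var.inj h)
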